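/- Let F = {f₁,…,fₙ} ⊂ ℂ[x₁,…,xₙ] be a polynomial system with an isolated singular zero p ∈ ℂⁿ, and let λ = (λ₁,…,λₙ) ∈ ℂⁿ be a nonzero vector with λ·J(F)(p) = 0 (a left null vector of the Jacobian at p). Define G′ = {λ₁ ∂f₁/∂x_j + ⋯ + λₙ ∂fₙ/∂x_j : j = 1,…,n}. Then the multiplicity of p as a zero of the augmented system F ∪ G′ is strictly smaller than the multiplicity of p as a zero of F. -/

import Mathlib

open MvPolynomial

/-- The rank over ℂ of the Jacobian matrix of a finite polynomial system, evaluated at `p`. -/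
noncomputable def jacRank {n : ℕ} {ι : Type*} [Fintype ι]
    (g : ι → MvPolynomial (Fin n) ℂ) (p : Fin n → ℂ) : ℕ :=
  (Matrix.of fun (i : ι) (j : Fin n) => eval p (pderiv j (g i))).rank

/-- The image in `ℂ[x]/⟨H⟩` of the maximal ideal `⟨x₁ − p₁,…,xₙ − pₙ⟩` of the point `p`. -/
noncomputable def maxIdealAt {n : ℕ} (H : Set (MvPolynomial (Fin n) ℂ)) (p : Fin n → ℂ) :
    Ideal (MvPolynomial (Fin n) ℂ ⧸ Ideal.span H) :=
  Ideal.map (Ideal.Quotient.mk (Ideal.span H))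
    (Ideal.span (Set.range fun i : Fin n => X i - C (p i)))

open Classical in
/-- The multiplicity of `p` as a zero of the polynomial system `H`: the ℂ-vector-space
dimension of the localization of `ℂ[x₁,…,xₙ]/⟨H⟩` at the maximal ideal
`⟨x₁ − p₁,…,xₙ − pₙ⟩` (and `0` in the degenerate case where this ideal is not prime,
which cannot happen when `p` is an isolated zero of `H`). -/
noncomputable def zeroMultiplicity {n : ℕ} (H : Set (MvPolynomial (Fin n) ℂ))
    (p : Fin n → ℂ) : ℕ :=
  if h : (maxIdealAt H p).IsPrime then
    haveI := h
    Module.finrank ℂ (Localization.AtPrime (maxIdealAt H p))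
  else 0

/-!
If the two multiplicities agreed, then, writing `g = ∑ λᵢ fᵢ`, every `∂g/∂xⱼ` would vanish in the
local ring of `ℂ[x]/⟨F⟩` at `p`. Since `λ ≠ 0`, we may replace one of the equations by `g`. The
remaining `n - 1` equations cut out a curve through `p` on which `g` is not zero, by Krull's height
theorem. A local ring of its normalization above `p` is a discrete valuation ring with residue
field `ℂ`; there `F` generates the same ideal as `g`, so `g` would divide all its partial
derivatives, hence its own derivative along the branch. In characteristic zero this is impossible,
since the order of `g` along the branch is positive and finite.

That an isolated zero `p` of `F` is a component of the zero scheme is where the topology of `ℂ`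
enters: over a Noether normalization of a positive-dimensional component, points close to the image
of `p` lift to points close to `p`, by continuity of the roots of monic polynomials.
-/

open Filter Topology

theorem exists_isRoot_norm_pow_le {𝕜 : Type*} [NormedField 𝕜] {P : Polynomial 𝕜} (hP : P.Monic)
    (hsplits : P.Splits) (hdeg : P.natDegree ≠ 0) :
    ∃ ζ, P.IsRoot ζ ∧ ‖ζ‖ ^ P.natDegree ≤ ‖P.coeff 0‖ := by
  classical
  have hcard : P.roots.card = P.natDegree := hsplits.natDegree_eq_card_roots.symm
  have hroots : ∃ r, r ∈ P.roots :=
    Multiset.card_pos_iff_exists_mem.mp (by rw [hcard]; exact hdeg.bot_lt)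
  obtain ⟨ζ, hζ, hmin⟩ := P.roots.toFinset.exists_min_image (‖·‖₊)
    (by simpa only [Finset.Nonempty, Multiset.mem_toFinset] using hroots)
  simp only [Multiset.mem_toFinset] at hζ hmin
  refine ⟨ζ, Polynomial.isRoot_of_mem_roots hζ, ?_⟩
  have hnorm : ‖P.coeff 0‖₊ = (P.roots.map (‖·‖₊)).prod := by
    rw [hsplits.coeff_zero_eq_prod_roots_of_monic hP, nnnorm_mul, nnnorm_pow, nnnorm_neg,
      nnnorm_one, one_pow, one_mul]
    exact map_multiset_prod (nnnormHom : 𝕜 →*₀ NNReal) _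
  have hle : ‖ζ‖₊ ^ (P.roots.map (‖·‖₊)).card ≤ (P.roots.map (‖·‖₊)).prod :=
    Multiset.pow_card_le_prod (by simpa only [Multiset.mem_map, forall_exists_index, and_imp,
      forall_apply_eq_imp_iff₂] using hmin)
  rw [Multiset.card_map, hcard, ← hnorm] at hle
  exact_mod_cast hle

theorem norm_le_one_add_sum_of_isRoot {𝕜 : Type*} [NormedField 𝕜] {P : Polynomial 𝕜}
    (hP : P.Monic) {ζ : 𝕜} (hζ : P.IsRoot ζ) :
    ‖ζ‖ ≤ 1 + ∑ i ∈ Finset.range P.natDegree, ‖P.coeff i‖ := by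
  have hbound : P.cauchyBound ≤ 1 + ∑ i ∈ Finset.range P.natDegree, ‖P.coeff i‖₊ := by
    rw [Polynomial.cauchyBound, hP.leadingCoeff, nnnorm_one, div_one, add_comm]
    gcongr
    exact Finset.sup_le fun i hi ↦
      Finset.single_le_sum (f := fun i ↦ ‖P.coeff i‖₊) (fun _ _ ↦ zero_le) hi
  simpa using NNReal.coe_le_coe.mpr ((hζ.norm_lt_cauchyBound hP.ne_zero).le.trans hbound)

theorem exists_ringHom_comp_eq_of_isIntegral {R A k : Type*} [CommRing R] [CommRing A] [Field k]
    [IsAlgClosed k] {φ : R →+* A} (hφ : φ.IsIntegral) (ψ : R →+* k)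
    (hker : RingHom.ker φ ≤ RingHom.ker ψ) : ∃ q : A →+* k, q.comp φ = ψ := by
  algebraize [φ, ψ]
  have := RingHom.ker_isPrime ψ
  obtain ⟨Q, -, hQ, hQP⟩ := Ideal.exists_ideal_over_prime_of_isIntegral (S := A) (RingHom.ker ψ) ⊥
    hker
  have hlies : Q.LiesOver (RingHom.ker ψ) := ⟨hQP.symm⟩
  let := (RingHom.kerLift ψ).toAlgebra
  have : FaithfulSMul (R ⧸ RingHom.ker ψ) k :=
    (faithfulSMul_iff_algebraMap_injective _ _).mpr (RingHom.kerLift_injective ψ)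
  have := Module.isTorsionFree_iff_faithfulSMul (R := R ⧸ RingHom.ker ψ) (A := A ⧸ Q) |>.mpr
    inferInstance
  let q : A ⧸ Q →ₐ[R ⧸ RingHom.ker ψ] k := IsAlgClosed.lift
  refine ⟨q.toRingHom.comp (Ideal.Quotient.mk Q), RingHom.ext fun r ↦ ?_⟩
  exact q.commutes (Ideal.Quotient.mk _ r)

theorem tendsto_zero_of_tendsto_pow {α 𝕜 : Type*} [NormedField 𝕜] {l : Filter α} {f : α → 𝕜}
    {n : ℕ} (hn : n ≠ 0) (hf : Tendsto (fun x ↦ f x ^ n) l (𝓝 0)) : Tendsto f l (𝓝 0) := by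
  rw [← Asymptotics.isLittleO_one_iff 𝕜] at hf ⊢
  exact Asymptotics.IsLittleO.of_pow (n := n) (by simpa only [Pi.pow_def, one_pow] using hf) hn

theorem tendsto_zero_of_mem_radical_span {α A 𝕜 : Type*} [CommRing A] [NormedField 𝕜] {l : Filter α}
    {q : α → A →+* 𝕜} (hbdd : ∀ a, IsBoundedUnder (· ≤ ·) l fun x ↦ ‖q x a‖) {T : Set A}
    (hT : ∀ t ∈ T, Tendsto (fun x ↦ q x t) l (𝓝 0)) {a : A} (ha : a ∈ (Ideal.span T).radical) :
    Tendsto (fun x ↦ q x a) l (𝓝 0) := by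
  have hspan (b : A) (hb : b ∈ Ideal.span T) : Tendsto (fun x ↦ q x b) l (𝓝 0) := by
    induction hb using Submodule.span_induction with
    | mem t ht => exact hT t ht
    | zero => simp only [map_zero, tendsto_const_nhds]
    | add s t _ _ hs ht => simpa only [map_add, add_zero] using hs.add ht
    | smul b t _ ht =>
      simpa only [smul_eq_mul, map_mul] using (hbdd b).smul_tendsto_zero ht
  obtain ⟨N, hN⟩ := ha
  refine tendsto_zero_of_tendsto_pow N.succ_ne_zero ?_
  simpa only [map_pow] using hspan (a ^ (N + 1)) (Ideal.pow_mem_of_pow_mem _ hN N.le_succ)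

theorem exists_mem_le_radical_span_sup_map_under {S A : Type*} [CommRing S] [CommRing A]
    [Algebra S A] [Module.Finite S A] (M : Ideal A) [M.IsMaximal] :
    ∃ z ∈ M, M ≤ (Ideal.span {z} ⊔ (M.under S).map (algebraMap S A)).radical := by
  obtain ⟨r, hrM, hr⟩ := Ideal.exists_not_mem_forall_mem_of_ne_of_liesOver (M.under S) M
  obtain ⟨b, z, hz, hbz⟩ := Ideal.IsMaximal.exists_inv ‹M.IsMaximal› hrM
  refine ⟨z, hz, ?_⟩
  rw [Ideal.radical_eq_sInf]
  refine le_sInf fun Q ⟨hle, hQ⟩ ↦ ?_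
  rw [sup_le_iff, Ideal.span_singleton_le_iff_mem, Ideal.map_le_iff_le_comap] at hle
  by_contra hne
  have hmax : (M.under S).IsMaximal := Ideal.isMaximal_comap_of_isIntegral_of_isMaximal M
  have hlies : Q.LiesOver (M.under S) := ⟨hmax.eq_of_le (Ideal.IsPrime.ne_top inferInstance) hle.2⟩
  have hrQ : r ∈ Q := hr Q hQ (fun h ↦ hne h.ge) hlies
  exact hQ.ne_top ((Ideal.eq_top_iff_one Q).mpr (hbz ▸ Q.add_mem (Q.mul_mem_left b hrQ) hle.1))

section IntegralOverPolynomials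

variable {σ k A : Type*} [Field k] [CommRing A] [Algebra k A]
  [Algebra (MvPolynomial σ k) A] [IsScalarTower k (MvPolynomial σ k) A]

theorem algHom_algebraMap_eq_eval (q : A →ₐ[k] k) (s : MvPolynomial σ k) :
    q (algebraMap _ A s) = eval (fun i ↦ q (algebraMap (MvPolynomial σ k) A (X i))) s := by
  have : q.comp (IsScalarTower.toAlgHom k (MvPolynomial σ k) A) =
      aeval fun i ↦ q (algebraMap (MvPolynomial σ k) A (X i)) := by
    ext i; simp
  simpa [aeval_eq_eval] using congr($this s)

theorem exists_algHom_apply_eq_of_eval_minpoly [IsAlgClosed k] [IsDomain A]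
    [Algebra.IsIntegral (MvPolynomial σ k) A] [FaithfulSMul (MvPolynomial σ k) A]
    (z : A) (y : σ → k) (ζ : k)
    (hζ : ((minpoly (MvPolynomial σ k) z).map (eval y)).IsRoot ζ) :
    ∃ q : A →ₐ[k] k, (∀ s, q (algebraMap (MvPolynomial σ k) A s) = eval y s) ∧ q z = ζ := by
  let φ : Polynomial (MvPolynomial σ k) →+* A := (Polynomial.aeval z).toRingHom
  have hz : IsIntegral (MvPolynomial σ k) z := Algebra.IsIntegral.isIntegral z
  have hφ : φ.IsIntegral := by
    refine RingHom.IsIntegral.tower_top Polynomial.C φ ?_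
    have : φ.comp Polynomial.C = algebraMap _ A := RingHom.ext fun s ↦ Polynomial.aeval_C z s
    rw [this]
    exact algebraMap_isIntegral_iff.mpr inferInstance
  have hker : RingHom.ker φ ≤ RingHom.ker (Polynomial.eval₂RingHom (eval y) ζ) := by
    intro P hP
    obtain ⟨Q, rfl⟩ := minpoly.isIntegrallyClosed_dvd hz (show Polynomial.aeval z P = 0 from hP)
    rw [RingHom.mem_ker, map_mul, Polynomial.coe_eval₂RingHom, Polynomial.eval₂_eq_eval_map,
      hζ.eq_zero, zero_mul]
  obtain ⟨q, hq⟩ := exists_ringHom_comp_eq_of_isIntegral hφ _ hker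
  have hqC (s : MvPolynomial σ k) : q (algebraMap _ A s) = eval y s := by
    simpa [φ] using congr($hq (Polynomial.C s))
  refine ⟨⟨q, fun c ↦ ?_⟩, hqC, ?_⟩
  · simpa [IsScalarTower.algebraMap_apply k (MvPolynomial σ k) A] using hqC (C c)
  · simpa [φ] using congr($hq Polynomial.X)

end IntegralOverPolynomials

section ContinuousSection

variable {σ A : Type*} [CommRing A] [Algebra ℂ A] [Algebra (MvPolynomial σ ℂ) A]

theorem isBoundedUnder_norm_of_isIntegral [Algebra.IsIntegral (MvPolynomial σ ℂ) A]
    {q : (σ → ℂ) → A →ₐ[ℂ] ℂ}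
    (hq : ∀ y s, q y (algebraMap (MvPolynomial σ ℂ) A s) = eval y s) (y₀ : σ → ℂ) (a : A) :
    IsBoundedUnder (· ≤ ·) (𝓝 y₀) fun y ↦ ‖q y a‖ := by
  obtain ⟨P, hP, hPa⟩ := Algebra.IsIntegral.isIntegral (R := MvPolynomial σ ℂ) a
  have hcont : Continuous fun y : σ → ℂ ↦
      1 + ∑ i ∈ Finset.range P.natDegree, ‖eval y (P.coeff i)‖ :=
    continuous_const.add (continuous_finsetSum _ fun i _ ↦ (continuous_eval _).norm)
  refine hcont.continuousAt.isBoundedUnder_le.mono_le (.of_forall fun y ↦ ?_)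
  have hroot : (P.map (eval y)).IsRoot (q y a) := by
    have hcomp : ((q y : A →+* ℂ).comp (algebraMap (MvPolynomial σ ℂ) A)) = eval y :=
      RingHom.ext (hq y)
    rw [Polynomial.IsRoot.def, Polynomial.eval_map, ← hcomp, ← RingHom.coe_coe (q y),
      ← Polynomial.hom_eval₂, hPa, map_zero]
  simpa only [hP.natDegree_map, Polynomial.coeff_map] using
    norm_le_one_add_sum_of_isRoot (hP.map _) hroot

theorem exists_algHom_family_tendsto_zero [IsScalarTower ℂ (MvPolynomial σ ℂ) A] [IsDomain A]
    [Algebra.IsIntegral (MvPolynomial σ ℂ) A] [FaithfulSMul (MvPolynomial σ ℂ) A]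
    (p : A →ₐ[ℂ] ℂ) {z : A} (hz : p z = 0) :
    ∃ q : (σ → ℂ) → A →ₐ[ℂ] ℂ, (∀ y s, q y (algebraMap (MvPolynomial σ ℂ) A s) = eval y s) ∧
      Tendsto (fun y ↦ q y z) (𝓝 fun i ↦ p (algebraMap (MvPolynomial σ ℂ) A (X i))) (𝓝 0) := by
  set y₀ : σ → ℂ := fun i ↦ p (algebraMap (MvPolynomial σ ℂ) A (X i)) with hy₀
  let P := minpoly (MvPolynomial σ ℂ) z
  have hz_int : IsIntegral (MvPolynomial σ ℂ) z := Algebra.IsIntegral.isIntegral z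
  have hP : P.Monic := minpoly.monic hz_int
  have hdeg : P.natDegree ≠ 0 := (minpoly.natDegree_pos hz_int).ne'
  have hroot (y : σ → ℂ) : ∃ ζ, (P.map (eval y)).IsRoot ζ ∧
      ‖ζ‖ ^ P.natDegree ≤ ‖eval y (P.coeff 0)‖ := by
    simpa only [hP.natDegree_map, Polynomial.coeff_map] using
      exists_isRoot_norm_pow_le (hP.map (eval y)) (IsAlgClosed.splits _)
        (by rwa [hP.natDegree_map])
  choose ζ hζ hζ_le using hroot
  choose q hq hqz using fun y ↦ exists_algHom_apply_eq_of_eval_minpoly z y (ζ y) (hζ y)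
  refine ⟨q, hq, ?_⟩
  have hcoeff : eval y₀ (P.coeff 0) = 0 := by
    have hPz : (p : A →+* ℂ) (Polynomial.aeval z P) = 0 := by rw [minpoly.aeval, map_zero]
    rw [Polynomial.aeval_def, Polynomial.hom_eval₂, RingHom.coe_coe, hz,
      Polynomial.eval₂_at_zero] at hPz
    rwa [hy₀, ← algHom_algebraMap_eq_eval p]
  have hlim : Tendsto (fun y ↦ eval y (P.coeff 0)) (𝓝 y₀) (𝓝 0) :=
    hcoeff ▸ (continuous_eval (P.coeff 0)).tendsto y₀
  refine tendsto_zero_of_tendsto_pow hdeg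
    (squeeze_zero_norm (fun y ↦ ?_) (norm_zero (E := ℂ) ▸ hlim.norm))
  rw [hqz, norm_pow]
  exact hζ_le y

theorem exists_algHom_family_tendsto [Finite σ] [IsScalarTower ℂ (MvPolynomial σ ℂ) A]
    [IsDomain A] [Module.Finite (MvPolynomial σ ℂ) A] [FaithfulSMul (MvPolynomial σ ℂ) A]
    (p : A →ₐ[ℂ] ℂ) :
    ∃ q : (σ → ℂ) → A →ₐ[ℂ] ℂ, (∀ y s, q y (algebraMap (MvPolynomial σ ℂ) A s) = eval y s) ∧
      ∀ a, Tendsto (fun y ↦ q y a) (𝓝 fun i ↦ p (algebraMap (MvPolynomial σ ℂ) A (X i)))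
        (𝓝 (p a)) := by
  set y₀ : σ → ℂ := fun i ↦ p (algebraMap (MvPolynomial σ ℂ) A (X i)) with hy₀
  have : (RingHom.ker p).IsMaximal :=
    RingHom.ker_isMaximal_of_surjective p fun c ↦ ⟨algebraMap ℂ A c, p.commutes c⟩
  obtain ⟨z, hz, hle⟩ :=
    exists_mem_le_radical_span_sup_map_under (S := MvPolynomial σ ℂ) (RingHom.ker p)
  obtain ⟨q, hq, hqz⟩ := exists_algHom_family_tendsto_zero (σ := σ) p hz
  refine ⟨q, hq, fun a ↦ ?_⟩
  let T : Set A := {z} ∪ algebraMap (MvPolynomial σ ℂ) A '' (RingHom.ker p).under (MvPolynomial σ ℂ)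
  have hgen : ∀ t ∈ T, Tendsto (fun y ↦ (q y : A →+* ℂ) t) (𝓝 y₀) (𝓝 0) := by
    rintro t (rfl | ⟨s, hs, rfl⟩)
    · exact hqz
    · simp only [RingHom.coe_coe, hq]
      have : eval y₀ s = 0 := by rwa [hy₀, ← algHom_algebraMap_eq_eval p s]
      exact this ▸ (continuous_eval s).tendsto y₀
  have hmem : a - algebraMap ℂ A (p a) ∈ (Ideal.span T).radical := by
    rw [Ideal.span_union]
    exact hle (by simp [RingHom.mem_ker])
  have := tendsto_zero_of_mem_radical_span (isBoundedUnder_norm_of_isIntegral hq y₀) hgen hmem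
  rw [← tendsto_sub_nhds_zero_iff]
  simpa using this

end ContinuousSection

theorem exists_finite_algebra_mvPolynomial (k A : Type*) [Field k] [CommRing A] [Nontrivial A]
    [Algebra k A] [Algebra.FiniteType k A] :
    ∃ (d : ℕ) (_ : Algebra (MvPolynomial (Fin d) k) A), IsScalarTower k (MvPolynomial (Fin d) k) A ∧
      Module.Finite (MvPolynomial (Fin d) k) A ∧ FaithfulSMul (MvPolynomial (Fin d) k) A := by
  obtain ⟨d, g, hinj, hfin⟩ := exists_finite_inj_algHom_of_fg k A
  let := g.toAlgebra
  exact ⟨d, g.toAlgebra, .of_algHom g, hfin, (faithfulSMul_iff_algebraMap_injective _ _).mpr hinj⟩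

theorem exists_filter_algHom_ne_tendsto {A : Type*} [CommRing A] [IsDomain A] [Algebra ℂ A]
    [Algebra.FiniteType ℂ A] {p : A →ₐ[ℂ] ℂ} (hp : RingHom.ker p ≠ ⊥) :
    ∃ l : Filter (A →ₐ[ℂ] ℂ), l.NeBot ∧ (∀ᶠ q in l, q ≠ p) ∧
      ∀ a, Tendsto (fun q : A →ₐ[ℂ] ℂ ↦ q a) l (𝓝 (p a)) := by
  obtain ⟨d, _, _, _, _⟩ := exists_finite_algebra_mvPolynomial ℂ A
  have : Nonempty (Fin d) := by
    by_contra hd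
    rw [not_nonempty_iff] at hd
    have hfield : IsField A := isField_of_isIntegral_of_isField'
      ((isEmptyAlgEquiv ℂ (Fin d)).toMulEquiv.isField (Field.toIsField ℂ))
    let := hfield.toField
    exact hp ((RingHom.injective_iff_ker_eq_bot p).mp p.toRingHom.injective)
  obtain ⟨q, hq, hlim⟩ := exists_algHom_family_tendsto (σ := Fin d) p
  refine ⟨(𝓝[≠] fun i ↦ p (algebraMap (MvPolynomial (Fin d) ℂ) A (X i))).map q, inferInstance, ?_,
    fun a ↦ ((hlim a).mono_left nhdsWithin_le_nhds)⟩
  rw [Filter.eventually_map]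
  filter_upwards [self_mem_nhdsWithin] with y hy hqy
  refine hy (funext fun i ↦ ?_)
  rw [← hqy, hq, eval_X]

theorem accPt_zeroLocus_of_lt_ker_eval {σ : Type*} [Finite σ] {P : Ideal (MvPolynomial σ ℂ)}
    [P.IsPrime] {p : σ → ℂ} (hP : P < RingHom.ker (eval p)) : AccPt p (𝓟 (zeroLocus ℂ P)) := by
  let coords (q : MvPolynomial σ ℂ ⧸ P →ₐ[ℂ] ℂ) (i : σ) : ℂ := q (Ideal.Quotient.mk P (X i))
  have eval_coords (q : MvPolynomial σ ℂ ⧸ P →ₐ[ℂ] ℂ) (s : MvPolynomial σ ℂ) :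
      q (Ideal.Quotient.mk P s) = aeval (coords q) s :=
    congr($(aeval_unique (q.comp (Ideal.Quotient.mkₐ ℂ P))) s)
  let p' : MvPolynomial σ ℂ ⧸ P →ₐ[ℂ] ℂ := Ideal.Quotient.liftₐ P (aeval p) hP.le
  have hp' (s : MvPolynomial σ ℂ) : p' (Ideal.Quotient.mk P s) = aeval p s :=
    Ideal.Quotient.lift_mk ..
  have hp'_ker : RingHom.ker p' ≠ ⊥ := by
    obtain ⟨s, hs, hsP⟩ := SetLike.exists_of_lt hP
    refine Submodule.ne_bot_iff _ |>.mpr ⟨Ideal.Quotient.mk P s, ?_, ?_⟩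
    · exact (hp' s).trans hs
    · rwa [Ne, Ideal.Quotient.eq_zero_iff_mem]
  obtain ⟨l, hl, hne, hlim⟩ := exists_filter_algHom_ne_tendsto hp'_ker
  have hcoords : Tendsto coords l (𝓝[≠] p ⊓ 𝓟 (zeroLocus ℂ P)) := by
    refine tendsto_inf.mpr ⟨tendsto_nhdsWithin_iff.mpr ⟨?_, ?_⟩, tendsto_principal.mpr ?_⟩
    · exact tendsto_pi_nhds.mpr fun i ↦ by
        simpa only [hp', aeval_X] using hlim (Ideal.Quotient.mk P (X i))
    · filter_upwards [hne] with q hq hqp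
      refine hq (Ideal.Quotient.algHom_ext ℂ (MvPolynomial.algHom_ext fun i ↦ ?_))
      exact congr($hqp i).trans ((hp' (X i)).trans (aeval_X p i)).symm
    · refine .of_forall fun q s hs ↦ ?_
      rw [← eval_coords, Ideal.Quotient.eq_zero_iff_mem.mpr hs, map_zero]
  exact hcoords.neBot

theorem ker_eval_mem_minimalPrimes_of_not_accPt {σ : Type*} [Finite σ]
    {I : Ideal (MvPolynomial σ ℂ)} {p : σ → ℂ} (hp : p ∈ zeroLocus ℂ I)
    (hisolated : ¬ AccPt p (𝓟 (zeroLocus ℂ I))) : RingHom.ker (eval p) ∈ I.minimalPrimes := by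
  have := RingHom.ker_isPrime (eval p)
  obtain ⟨P, hPmin, hP⟩ := Ideal.exists_minimalPrimes_le (J := RingHom.ker (eval p)) hp
  have := hPmin.1.1
  rcases hP.lt_or_eq with hlt | rfl
  · exact absurd ((accPt_zeroLocus_of_lt_ker_eval hlt).mono
      (principal_mono.mpr (zeroLocus_anti_mono hPmin.1.2))) hisolated
  · exact hPmin

theorem derivation_aeval_eq_sum_pderiv {R A M σ : Type*} [CommSemiring R] [CommSemiring A]
    [Algebra R A] [AddCommMonoid M] [Module A M] [Module R M] [IsScalarTower R A M] [Fintype σ]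
    (d : Derivation R A M) (ξ : σ → A) (g : MvPolynomial σ R) :
    d (aeval ξ g) = ∑ j, aeval ξ (pderiv j g) • d (ξ j) := by
  classical
  induction g using MvPolynomial.induction_on with
  | C c => simp
  | add g h hg hh => simp only [map_add, hg, hh, add_smul, Finset.sum_add_distrib]
  | mul_X g i hg =>
    simp only [map_mul, aeval_X, d.leibniz, hg, Derivation.leibniz, pderiv_X, Pi.single_apply,
      smul_eq_mul, map_add, add_smul, mul_smul, Finset.sum_add_distrib, Finset.smul_sum,
      apply_ite (aeval ξ), map_one, map_zero, ite_smul, one_smul, zero_smul, smul_zero,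
      Finset.sum_ite_eq, Finset.mem_univ, if_true, mul_ite]

theorem exists_pow_dvd_sub_aeval {R D : Type*} [CommRing R] [CommRing D] [Algebra R D] {t : D}
    (hres : ∀ d : D, ∃ c : R, t ∣ d - algebraMap R D c) (d : D) (N : ℕ) :
    ∃ P : Polynomial R, t ^ N ∣ d - Polynomial.aeval t P := by
  induction N with
  | zero => exact ⟨0, by simp⟩
  | succ N ih =>
    obtain ⟨P, u, hu⟩ := ih
    obtain ⟨c, v, hv⟩ := hres u
    refine ⟨P + Polynomial.C c * Polynomial.X ^ N, v, ?_⟩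
    simp only [map_add, map_mul, Polynomial.aeval_C, map_pow, Polynomial.aeval_X]
    linear_combination hu + t ^ N * hv

theorem X_pow_dvd_of_pow_dvd_aeval {k D : Type*} [Field k] [CommRing D] [IsDomain D] [Algebra k D]
    {t : D} (ht₀ : t ≠ 0) (ht : ¬ IsUnit t) {P : Polynomial k} {N : ℕ}
    (h : t ^ N ∣ Polynomial.aeval t P) : Polynomial.X ^ N ∣ P := by
  induction N generalizing P with
  | zero => simp only [pow_zero, one_dvd]
  | succ N ih =>
    have haeval :
        Polynomial.aeval t P = t * Polynomial.aeval t P.divX + algebraMap k D (P.coeff 0) := by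
      simpa only [map_add, map_mul, Polynomial.aeval_X, Polynomial.aeval_C]
        using congr(Polynomial.aeval t $(P.X_mul_divX_add.symm))
    have hcoeff : P.coeff 0 = 0 := by
      by_contra hc
      have : t ∣ algebraMap k D (P.coeff 0) :=
        (dvd_add_right (dvd_mul_right t _)).mp (haeval ▸ (dvd_pow_self t N.succ_ne_zero).trans h)
      exact ht (isUnit_of_dvd_unit this ((Ne.isUnit hc).map _))
    rw [← P.X_mul_divX_add, hcoeff, Polynomial.C_0, add_zero, pow_succ']
    rw [haeval, hcoeff, map_zero, add_zero, pow_succ'] at h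
    exact mul_dvd_mul_left _ (ih ((mul_dvd_mul_iff_left ht₀).mp h))

theorem X_pow_succ_dvd_of_dvd_derivative {R : Type*} [CommRing R] [IsDomain R] [CharZero R]
    {P : Polynomial R} (hP : P.coeff 0 = 0) {e : ℕ}
    (h : Polynomial.X ^ e ∣ Polynomial.derivative P) : Polynomial.X ^ (e + 1) ∣ P := by
  rw [Polynomial.X_pow_dvd_iff] at h ⊢
  rintro (_ | d) hd
  · exact hP
  · have := h d (by lia)
    rw [Polynomial.coeff_derivative] at this
    exact (mul_eq_zero.mp this).resolve_right (Nat.cast_add_one_ne_zero d)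

theorem dvd_algHom_sub_algHom {σ R D : Type*} [CommRing R] [CommRing D] [Algebra R D] {t : D}
    {φ ψ : MvPolynomial σ R →ₐ[R] D} (h : ∀ j, t ∣ φ (X j) - ψ (X j)) (g : MvPolynomial σ R) :
    t ∣ φ g - ψ g := by
  have heq : (Ideal.Quotient.mkₐ R (Ideal.span {t})).comp φ =
      (Ideal.Quotient.mkₐ R (Ideal.span {t})).comp ψ :=
    MvPolynomial.algHom_ext fun j ↦
      Ideal.Quotient.eq.mpr (Ideal.mem_span_singleton.mpr (h j))
  exact Ideal.mem_span_singleton.mp (Ideal.Quotient.eq.mp (DFunLike.congr_fun heq g))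

theorem exists_dvd_sub_algebraMap {k D : Type*} [Field k] [CommRing D] [IsDomain D]
    [IsDiscreteValuationRing D] [Algebra k D]
    (hres : Function.Surjective (algebraMap k (IsLocalRing.ResidueField D))) {t : D}
    (ht : Irreducible t) (d : D) : ∃ c : k, t ∣ d - algebraMap k D c := by
  obtain ⟨c, hc⟩ := hres (IsLocalRing.residue D d)
  refine ⟨c, ?_⟩
  rw [← Ideal.mem_span_singleton, ← ht.maximalIdeal_eq, ← IsLocalRing.residue_eq_zero_iff,
    map_sub, ← hc, sub_eq_zero]
  rfl

theorem exists_not_dvd_pderiv {σ k D : Type*} [Finite σ] [Field k] [CharZero k] [CommRing D]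
    [IsDomain D] [IsDiscreteValuationRing D] [Algebra k D]
    (hres : Function.Surjective (algebraMap k (IsLocalRing.ResidueField D)))
    (φ : MvPolynomial σ k →ₐ[k] D) {g : MvPolynomial σ k} (hg₀ : φ g ≠ 0)
    (hg : ¬ IsUnit (φ g)) : ∃ j, ¬ φ g ∣ φ (pderiv j g) := by
  cases nonempty_fintype σ
  obtain ⟨t, ht⟩ := IsDiscreteValuationRing.exists_irreducible D
  obtain ⟨e, he⟩ := IsDiscreteValuationRing.associated_pow_irreducible hg₀ ht
  have he₀ : e ≠ 0 := fun h ↦ hg (he.symm.isUnit (by simp only [h, pow_zero, isUnit_one]))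
  -- The branch `φ` agrees with a polynomial arc `ξ` up to order `e + 1` in the parameter `t`.
  choose ξ hξ using fun j ↦
    exists_pow_dvd_sub_aeval (exists_dvd_sub_algebraMap hres ht) (φ (X j)) (e + 1)
  have happrox (h : MvPolynomial σ k) :
      t ^ (e + 1) ∣ φ h - Polynomial.aeval t (aeval ξ h) :=
    dvd_algHom_sub_algHom (ψ := (Polynomial.aeval t).comp (aeval ξ))
      (fun j ↦ by simpa only [AlgHom.comp_apply, aeval_X] using hξ j) h
  have hdvd {N : ℕ} (hN : N ≤ e + 1) (h : MvPolynomial σ k) :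
      t ^ N ∣ φ h ↔ Polynomial.X ^ N ∣ aeval ξ h := by
    rw [dvd_iff_dvd_of_dvd_sub ((pow_dvd_pow t hN).trans (happrox h))]
    exact ⟨X_pow_dvd_of_pow_dvd_aeval ht.ne_zero ht.not_isUnit,
      fun h ↦ by simpa only [map_pow, Polynomial.aeval_X] using map_dvd (Polynomial.aeval t) h⟩
  have hcoeff : (aeval ξ g).coeff 0 = 0 :=
    Polynomial.X_dvd_iff.mp ((dvd_pow_self _ he₀).trans ((hdvd e.le_succ g).mp he.symm.dvd))
  by_contra! hall
  have hderiv : Polynomial.X ^ e ∣ Polynomial.derivative (aeval ξ g) := by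
    rw [← Polynomial.derivative'_apply, derivation_aeval_eq_sum_pderiv]
    exact Finset.dvd_sum fun j _ ↦
      ((hdvd e.le_succ _).mp (he.symm.dvd.trans (hall j))).mul_right _
  have hlt := ((hdvd le_rfl g).mpr (X_pow_succ_dvd_of_dvd_derivative hcoeff hderiv)).trans he.dvd
  exact absurd ((pow_dvd_pow_iff ht.ne_zero ht.not_isUnit).mp hlt) (by lia)

theorem height_ker_eval_add {σ k : Type*} [Field k] (p c : σ → k) :
    (RingHom.ker (eval (p + c))).height = (RingHom.ker (eval p)).height := by
  let e : MvPolynomial σ k ≃ₐ[k] MvPolynomial σ k :=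
    AlgEquiv.ofAlgHom (aeval fun i ↦ X i + C (c i)) (aeval fun i ↦ X i - C (c i))
      (by ext; simp [algHom_C]) (by ext; simp [algHom_C])
  have he : eval (p + c) = (eval p).comp (e : MvPolynomial σ k →+* MvPolynomial σ k) := by
    ext <;> simp [e]
  rw [he, ← RingHom.comap_ker]
  exact RingEquiv.height_comap e.toRingEquiv _

-- Translations act transitively on points, so every maximal ideal has the largest possible height.
theorem height_ker_eval {σ k : Type*} [Finite σ] [Field k] [IsAlgClosed k] (p : σ → k) :
    (RingHom.ker (eval p)).height = Nat.card σ := by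
  have hdim : ringKrullDim (MvPolynomial σ k) = Nat.card σ := by
    rw [ringKrullDim_of_isNoetherianRing, ringKrullDim_eq_zero_of_field, zero_add]
  have : FiniteRingKrullDim (MvPolynomial σ k) :=
    finiteRingKrullDim_iff_ne_bot_and_top.mpr
      (hdim ▸ ⟨WithBot.coe_ne_bot, WithBot.coe_injective.ne (ENat.natCast_ne_top _)⟩)
  obtain ⟨m, hm, hheight⟩ := Ideal.exists_isMaximal_height (R := MvPolynomial σ k)
  obtain ⟨q, rfl⟩ := isMaximal_iff_eq_vanishingIdeal_singleton.mp hm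
  have hq : vanishingIdeal k {q} = RingHom.ker (eval q) := by
    ext
    rw [mem_vanishingIdeal_singleton_iff, RingHom.mem_ker, aeval_eq_eval]
  rw [hdim, hq, ← height_ker_eval_add q (p - q), add_sub_cancel] at hheight
  exact_mod_cast hheight

theorem surjective_algebraMap_residueField_atPrime {k A : Type*} [Field k] [IsAlgClosed k]
    [CommRing A] [Algebra k A] [Algebra.FiniteType k A] (M : Ideal A) [M.IsMaximal] :
    Function.Surjective
      (algebraMap k (IsLocalRing.ResidueField (Localization.AtPrime M))) := by
  let := Ideal.Quotient.field M
  have := finite_of_finite_type_of_isJacobsonRing k (A ⧸ M)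
  have hk : Function.Bijective (algebraMap k (A ⧸ M)) :=
    IsAlgClosed.algebraMap_bijective_of_isIntegral
  rw [IsScalarTower.algebraMap_eq k (A ⧸ M) M.ResidueField]
  exact M.bijective_algebraMap_quotient_residueField.surjective.comp hk.surjective

theorem height_le_height_under_of_isIntegral (R : Type*) {S : Type*} [CommRing R] [CommRing S]
    [Algebra R S] [Algebra.IsIntegral R S] (q : Ideal S) [hq : q.IsPrime] :
    q.height ≤ (q.under R).height := by
  simpa only [← PrimeSpectrum.height_eq_orderHeight, PrimeSpectrum.comap_asIdeal] using
    Order.height_le_height_apply_of_strictMono (PrimeSpectrum.comap (algebraMap R S))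
      (fun I _ h ↦ Ideal.IsIntegral.comap_lt_comap (I := I.asIdeal) h) ⟨q, hq⟩

theorem isDiscreteValuationRing_atPrime {B : Type*} [CommRing B] [IsDomain B]
    [IsNoetherianRing B] [IsIntegrallyClosed B] {q : Ideal B} [q.IsPrime] (hq₀ : q ≠ ⊥)
    (hq : q.height ≤ 1) : IsDiscreteValuationRing (Localization.AtPrime q) := by
  have hfield : ¬ IsField (Localization.AtPrime q) := by
    rwa [IsLocalRing.isField_iff_maximalIdeal_eq, ← Localization.AtPrime.map_eq_maximalIdeal,
      Ideal.map_eq_bot_iff_of_injective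
        (IsLocalization.injective _ q.primeCompl_le_nonZeroDivisors)]
  have : Ring.KrullDimLE 1 (Localization.AtPrime q) := by
    rw [Ring.krullDimLE_iff, IsLocalization.AtPrime.ringKrullDim_eq_height q]
    exact_mod_cast hq
  have : Ring.DimensionLEOne (Localization.AtPrime q) := ⟨fun h hI ↦ hI.isMaximal_of_ne_bot h⟩
  have : IsIntegrallyClosed (Localization.AtPrime q) :=
    isIntegrallyClosed_of_isLocalization _ q.primeCompl q.primeCompl_le_nonZeroDivisors
  have : IsDedekindDomain (Localization.AtPrime q) := {}
  exact ((IsDiscreteValuationRing.TFAE (Localization.AtPrime q) hfield).out 0 2).mpr this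

theorem finite_integralClosure_fractionRing (k A : Type*) [Field k] [CharZero k] [CommRing A]
    [IsDomain A] [Algebra k A] [Algebra.FiniteType k A] :
    Module.Finite A (integralClosure A (FractionRing A)) := by
  obtain ⟨d, _, _, _, _⟩ := exists_finite_algebra_mvPolynomial k A
  let S := MvPolynomial (Fin d) k
  have : FaithfulSMul S (FractionRing A) := .trans S A _
  let := FractionRing.liftAlgebra S (FractionRing A)
  have : IsIntegralClosure (integralClosure A (FractionRing A)) S (FractionRing A) :=
    ⟨Subtype.val_injective, fun {x} ↦ ⟨fun h ↦ ⟨⟨x, h.tower_top⟩, rfl⟩,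
      by rintro ⟨y, rfl⟩; exact isIntegral_trans (R := S) _ y.2⟩⟩
  have : Module.Finite S (integralClosure A (FractionRing A)) :=
    IsIntegralClosure.finite S (FractionRing S) (FractionRing A) _
  exact Module.Finite.of_restrictScalars_finite S A _

theorem exists_liesOver_isDiscreteValuationRing {A : Type*} [CommRing A] [IsDomain A]
    [IsNoetherianRing A] [Module.Finite A (integralClosure A (FractionRing A))] {M : Ideal A}
    [M.IsMaximal] (hM₀ : M ≠ ⊥) (hM : M.height ≤ 1) :
    ∃ (q : Ideal (integralClosure A (FractionRing A))) (_ : q.IsMaximal), q.LiesOver M ∧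
      IsDiscreteValuationRing (Localization.AtPrime q) := by
  have : IsNoetherianRing (integralClosure A (FractionRing A)) := .of_finite A _
  have : IsIntegrallyClosed (integralClosure A (FractionRing A)) :=
    integralClosure.isIntegrallyClosedOfFiniteExtension (FractionRing A)
  obtain ⟨q, hq, hqM⟩ := Ideal.exists_maximal_ideal_liesOver_of_isIntegral
    (S := integralClosure A (FractionRing A)) M
  refine ⟨q, hq, hqM, isDiscreteValuationRing_atPrime (Ideal.ne_bot_of_liesOver_of_ne_bot hM₀ q) ?_⟩
  calc q.height ≤ (q.under A).height := height_le_height_under_of_isIntegral A q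
    _ = M.height := by rw [← hqM.over]
    _ ≤ 1 := hM

theorem exists_not_dvd_mul_pderiv {σ k A : Type*} [Finite σ] [Field k] [CharZero k] [IsAlgClosed k]
    [CommRing A] [IsDomain A] [Algebra k A] [Algebra.FiniteType k A] {M : Ideal A} [M.IsMaximal]
    (hM : M.height ≤ 1) (π : MvPolynomial σ k →ₐ[k] A) {g : MvPolynomial σ k} (hg₀ : π g ≠ 0)
    (hg : π g ∈ M) : ∃ j, ∀ s ∉ M, ¬ π g ∣ s * π (pderiv j g) := by
  have : IsNoetherianRing A := Algebra.FiniteType.isNoetherianRing k A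
  have : Module.Finite A (integralClosure A (FractionRing A)) :=
    finite_integralClosure_fractionRing k A
  have : Algebra.FiniteType k (integralClosure A (FractionRing A)) :=
    .trans (S := A) inferInstance inferInstance
  obtain ⟨q, _, _, _⟩ := exists_liesOver_isDiscreteValuationRing (M.ne_bot_iff.mpr ⟨_, hg, hg₀⟩) hM
  let D := Localization.AtPrime q
  have hinj : Function.Injective (algebraMap A D) := by
    rw [IsScalarTower.algebraMap_eq A (integralClosure A (FractionRing A)) D]
    exact (IsLocalization.injective D q.primeCompl_le_nonZeroDivisors).comp
      (FaithfulSMul.algebraMap_injective _ _)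
  have hunit (a : A) : IsUnit (algebraMap A D a) ↔ a ∉ M := by
    rw [IsScalarTower.algebraMap_apply A (integralClosure A (FractionRing A)) D,
      IsLocalization.AtPrime.isUnit_to_map_iff D q, Ideal.mem_primeCompl_iff,
      ← Ideal.mem_of_liesOver q M]
  obtain ⟨j, hj⟩ := exists_not_dvd_pderiv (surjective_algebraMap_residueField_atPrime q)
    ((IsScalarTower.toAlgHom k A D).comp π) (g := g) ((map_ne_zero_iff _ hinj).mpr hg₀)
    (fun h ↦ (hunit _).mp h hg)
  refine ⟨j, fun s hs hdvd ↦ hj ?_⟩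
  have := map_dvd (algebraMap A D) hdvd
  rwa [map_mul, ((hunit s).mpr hs).dvd_mul_left] at this

theorem exists_isPrime_mem_minimalPrimes_sup_span_singleton {R : Type*} [CommRing R]
    [IsNoetherianRing R] {s : Set R} (hs : s.Finite) {g : R} {m : Ideal R}
    (hm : m ∈ (Ideal.span (insert g s)).minimalPrimes) (hheight : s.ncard < m.height) :
    ∃ P : Ideal R, P.IsPrime ∧ s ⊆ P ∧ g ∉ P ∧ m ∈ (P ⊔ Ideal.span {g}).minimalPrimes := by
  obtain ⟨⟨_, hle⟩, hmin⟩ := hm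
  have hgs : insert g s ⊆ (m : Set R) := Ideal.span_le.mp hle
  obtain ⟨P, hP, hPm⟩ := Ideal.exists_minimalPrimes_le
    (Ideal.span_le.mpr ((Set.subset_insert g s).trans hgs))
  have hsP : s ⊆ P := Ideal.span_le.mp hP.1.2
  refine ⟨P, hP.1.1, hsP, fun hgP ↦ hheight.not_ge ?_, ⟨inferInstance, ?_⟩, fun Q hQ hQm ↦ ?_⟩
  · have hmP : m ≤ P := hmin ⟨hP.1.1, Ideal.span_le.mpr (Set.insert_subset hgP hsP)⟩ hPm
    exact (Ideal.height_mono hmP).trans (Ideal.height_le_card_of_mem_minimalPrimes_span hs hP)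
  · exact sup_le hPm ((Ideal.span_singleton_le_iff_mem _).mpr (hgs (Set.mem_insert g s)))
  · refine hmin ⟨hQ.1, Ideal.span_le.mpr (Set.insert_subset ?_ ?_)⟩ hQm
    · exact hQ.2 (Ideal.mem_sup_right (Ideal.mem_span_singleton_self g))
    · exact fun x hx ↦ hQ.2 (Ideal.mem_sup_left (hsP hx))

instance isMaximal_ker_eval {σ k : Type*} [Field k] (p : σ → k) :
    (RingHom.ker (eval p)).IsMaximal :=
  RingHom.ker_isMaximal_of_surjective _ fun c ↦ ⟨C c, eval_C c⟩

theorem exists_mul_pderiv_notMem_span_insert {σ k : Type*} [Finite σ] [Field k] [CharZero k]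
    [IsAlgClosed k] {s : Set (MvPolynomial σ k)} (hs : s.Finite) (hcard : s.ncard < Nat.card σ)
    {g : MvPolynomial σ k} {p : σ → k}
    (hp : RingHom.ker (eval p) ∈ (Ideal.span (insert g s)).minimalPrimes) :
    ∃ j, ∀ u, eval p u ≠ 0 → u * pderiv j g ∉ Ideal.span (insert g s) := by
  obtain ⟨P, _, hsP, hgP, hmin⟩ := exists_isPrime_mem_minimalPrimes_sup_span_singleton hs hp
    (by rw [height_ker_eval]; exact_mod_cast hcard)
  obtain ⟨hPp, hgp⟩ := sup_le_iff.mp hmin.1.2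
  let π := Ideal.Quotient.mkₐ k P
  let M := (RingHom.ker (eval p)).map (Ideal.Quotient.mk P)
  have hmem (u : MvPolynomial σ k) : π u ∈ M ↔ eval p u = 0 := by
    rw [← RingHom.mem_ker]
    exact Ideal.mem_quotient_iff_mem hPp
  have : M.IsMaximal := .map_of_surjective_of_ker_le Ideal.Quotient.mk_surjective
    (Ideal.mk_ker.trans_le hPp)
  obtain ⟨j, hj⟩ := exists_not_dvd_mul_pderiv (M := M)
    (Ideal.map_height_le_one_of_mem_minimalPrimes hmin) π (g := g)
    (Ideal.Quotient.eq_zero_iff_mem.not.mpr hgP)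
    ((hmem g).mpr ((Ideal.span_singleton_le_iff_mem _).mp hgp))
  have hmap : Ideal.span (insert g s) ≤ (Ideal.span {π g}).comap π := by
    refine Ideal.span_le.mpr (Set.insert_subset (Ideal.mem_span_singleton_self _) fun x hx ↦ ?_)
    have hx₀ : π x = 0 := Ideal.Quotient.eq_zero_iff_mem.mpr (hsP hx)
    exact Ideal.mem_comap.mpr (hx₀ ▸ zero_mem _)
  refine ⟨j, fun u hu hmul ↦ hj (π u) ((hmem u).not.mpr hu) ?_⟩
  rw [← map_mul]
  exact Ideal.mem_span_singleton.mp (hmap hmul)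

theorem span_insert_sum_smul_image_compl {R V ι : Type*} [Ring R] [AddCommGroup V] [Module R V]
    [Fintype ι] {c : ι → R} {i₀ : ι} (hc : IsUnit (c i₀)) (v : ι → V) :
    Submodule.span R (insert (∑ i, c i • v i) (v '' {i₀}ᶜ)) = Submodule.span R (Set.range v) := by
  classical
  apply le_antisymm <;> rw [Submodule.span_le]
  · refine Set.insert_subset (Submodule.sum_mem _ fun i _ ↦ Submodule.smul_mem _ _ ?_) ?_
    · exact Submodule.subset_span ⟨i, rfl⟩
    · exact (Set.image_subset_range _ _).trans Submodule.subset_span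
  · set S := Submodule.span R (insert (∑ i, c i • v i) (v '' {i₀}ᶜ))
    have hne (i : ι) (hi : i ≠ i₀) : v i ∈ S := Submodule.subset_span (.inr ⟨i, hi, rfl⟩)
    rintro _ ⟨i, rfl⟩
    obtain rfl | hi := eq_or_ne i i₀
    · have hrest : ∑ j ∈ Finset.univ.erase i, c j • v j ∈ S :=
        S.sum_mem fun j hj ↦ S.smul_mem _ (hne j (Finset.ne_of_mem_erase hj))
      rw [SetLike.mem_coe, ← S.smul_mem_iff_of_isUnit hc, ← S.add_mem_iff_left hrest,
        Finset.add_sum_erase _ (fun j ↦ c j • v j) (Finset.mem_univ i)]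
      exact Submodule.subset_span (.inl rfl)
    · exact hne i hi

theorem exists_mul_pderiv_sum_notMem_span_range {σ k : Type*} [Fintype σ] [Field k] [CharZero k]
    [IsAlgClosed k] {f : σ → MvPolynomial σ k} {p : σ → k}
    (hp : RingHom.ker (eval p) ∈ (Ideal.span (Set.range f)).minimalPrimes) {c : σ → k}
    (hc : c ≠ 0) :
    ∃ j, ∀ u, eval p u ≠ 0 → u * ∑ i, C (c i) * pderiv j (f i) ∉ Ideal.span (Set.range f) := by
  obtain ⟨i₀, hi₀⟩ := Function.ne_iff.mp hc
  have hspan : Ideal.span (insert (∑ i, C (c i) * f i) (f '' {i₀}ᶜ)) = Ideal.span (Set.range f) :=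
    span_insert_sum_smul_image_compl (c := fun i ↦ C (c i)) ((isUnit_iff_ne_zero.mpr hi₀).map C) f
  have hcard : (f '' {i₀}ᶜ).ncard < Nat.card σ :=
    (Set.ncard_image_le (Set.toFinite _)).trans_lt (Set.ncard_lt_card (by simp))
  rw [← hspan] at hp ⊢
  obtain ⟨j, hj⟩ := exists_mul_pderiv_notMem_span_insert (Set.toFinite _) hcard hp
  have hderiv : pderiv j (∑ i, C (c i) * f i) = ∑ i, C (c i) * pderiv j (f i) := by
    simp only [C_mul', map_sum, Derivation.map_smul]
  exact ⟨j, hderiv ▸ hj⟩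

theorem ker_eval_eq_span {σ R : Type*} [CommRing R] (p : σ → R) :
    RingHom.ker (eval p) = Ideal.span (Set.range fun i ↦ X i - C (p i)) := by
  set J := Ideal.span (Set.range fun i ↦ X i - C (p i))
  refine le_antisymm (fun h hh ↦ ?_) (Ideal.span_le.mpr ?_)
  · have hmk : Ideal.Quotient.mk J = ((Ideal.Quotient.mk J).comp C).comp (eval p) := by
      ext i
      · simp
      · simpa [J, Ideal.Quotient.eq] using Ideal.subset_span (Set.mem_range_self i)
    rw [← Ideal.Quotient.eq_zero_iff_mem, hmk, RingHom.comp_apply, RingHom.mem_ker.mp hh, map_zero]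
  · rintro _ ⟨i, rfl⟩
    simp [RingHom.mem_ker]

theorem finite_localization_atPrime_of_mem_minimalPrimes (k : Type*) {A : Type*} [Field k]
    [CommRing A] [Algebra k A] [Algebra.FiniteType k A] {I : Ideal A} [hI : I.IsMaximal]
    (hmin : I ∈ minimalPrimes A) : Module.Finite k (Localization.AtPrime I) := by
  have : IsNoetherianRing A := Algebra.FiniteType.isNoetherianRing k A
  have : IsJacobsonRing A := isJacobsonRing_of_finiteType (A := k)
  let x : PrimeSpectrum A := ⟨I, hI.isPrime⟩
  have hopen : IsOpen {x} := by
    refine ((PrimeSpectrum.isOpen_singleton_tfae_of_isNoetherian_of_isJacobsonRing x).out 0 2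
      rfl rfl).mpr ⟨(PrimeSpectrum.isClosed_singleton_iff_isMaximal x).mpr hI, ?_⟩
    rintro _ y hyx rfl
    rw [← PrimeSpectrum.le_iff_specializes] at hyx
    exact PrimeSpectrum.ext (le_antisymm hyx (hmin.2 ⟨y.2, bot_le⟩ hyx))
  have : Algebra.QuasiFiniteAt k I := .of_isOpen_singleton x hopen
  exact .of_quasiFinite

theorem finrank_localization_atPrime_lt {k A B : Type*} [Field k] [CommRing A] [CommRing B]
    [Algebra k A] [Algebra k B] {π : A →ₐ[k] B} (hπ : Function.Surjective π) {I : Ideal A}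
    {J : Ideal B} [I.IsPrime] [J.IsPrime] (hIJ : I = J.comap π)
    [Module.Finite k (Localization.AtPrime I)] {a : A} (ha : π a = 0)
    (hI : ∀ s ∉ I, s * a ≠ 0) :
    Module.finrank k (Localization.AtPrime J) < Module.finrank k (Localization.AtPrime I) := by
  let Φ : Localization.AtPrime I →ₐ[k] Localization.AtPrime J := Localization.localAlgHom I J π hIJ
  have hsurj : Function.Surjective Φ := by
    subst hIJ
    exact RingHom.surjectiveOnStalks_of_surjective (f := π.toRingHom) hπ J inferInstance
  have : Module.Finite k (Localization.AtPrime J) := .of_surjective Φ.toLinearMap hsurj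
  have hle := LinearMap.finrank_le_finrank_of_surjective (f := Φ.toLinearMap) hsurj
  refine hle.lt_of_ne' fun heq ↦ ?_
  have hinj : Function.Injective Φ :=
    (LinearMap.injective_iff_surjective_of_finrank_eq_finrank heq (f := Φ.toLinearMap)).mpr hsurj
  have hΦ : Φ (algebraMap A _ a) = 0 := by
    rw [← map_zero (algebraMap B _), ← ha]
    exact Localization.localRingHom_to_map I J π.toRingHom hIJ a
  obtain ⟨s, hs⟩ := (IsLocalization.map_eq_zero_iff I.primeCompl _ a).mp
    ((map_eq_zero_iff Φ hinj).mp hΦ)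
  exact hI s s.2 hs

section Multiplicity

variable {n : ℕ} {H H' : Set (MvPolynomial (Fin n) ℂ)} {p : Fin n → ℂ}

theorem mk_mem_maxIdealAt_iff (hH : Ideal.span H ≤ RingHom.ker (eval p))
    {u : MvPolynomial (Fin n) ℂ} :
    Ideal.Quotient.mk (Ideal.span H) u ∈ maxIdealAt H p ↔ eval p u = 0 := by
  rw [maxIdealAt, ← ker_eval_eq_span, Ideal.mem_quotient_iff_mem hH, RingHom.mem_ker]

theorem isMaximal_maxIdealAt (hH : Ideal.span H ≤ RingHom.ker (eval p)) :
    (maxIdealAt H p).IsMaximal := by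
  rw [maxIdealAt, ← ker_eval_eq_span]
  exact .map_of_surjective_of_ker_le Ideal.Quotient.mk_surjective (Ideal.mk_ker.trans_le hH)

theorem maxIdealAt_mem_minimalPrimes
    (hp : RingHom.ker (eval p) ∈ (Ideal.span H).minimalPrimes) :
    maxIdealAt H p ∈ minimalPrimes (MvPolynomial (Fin n) ℂ ⧸ Ideal.span H) := by
  change maxIdealAt H p ∈ Ideal.minimalPrimes ⊥
  rw [← Ideal.map_bot (f := Ideal.Quotient.mk (Ideal.span H)),
    Ideal.minimalPrimes_map_of_surjective Ideal.Quotient.mk_surjective, Ideal.mk_ker, bot_sup_eq]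
  exact ⟨_, hp, by rw [maxIdealAt, ker_eval_eq_span]⟩

theorem zeroMultiplicity_lt_of_subset (hsub : H ⊆ H')
    (hH' : Ideal.span H' ≤ RingHom.ker (eval p))
    (hp : RingHom.ker (eval p) ∈ (Ideal.span H).minimalPrimes) {h : MvPolynomial (Fin n) ℂ}
    (hh : h ∈ H') (hloc : ∀ u, eval p u ≠ 0 → u * h ∉ Ideal.span H) :
    zeroMultiplicity H' p < zeroMultiplicity H p := by
  have hH := hp.1.2
  have := isMaximal_maxIdealAt hH
  have := isMaximal_maxIdealAt hH'
  have := finite_localization_atPrime_of_mem_minimalPrimes ℂ (maxIdealAt_mem_minimalPrimes hp)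
  rw [zeroMultiplicity, zeroMultiplicity, dif_pos (Ideal.IsMaximal.isPrime ‹_›),
    dif_pos (Ideal.IsMaximal.isPrime ‹_›)]
  have hle : Ideal.span H ≤ Ideal.span H' := Ideal.span_mono hsub
  refine finrank_localization_atPrime_lt (π := Ideal.Quotient.factorₐ ℂ hle)
    (Ideal.Quotient.factor_surjective hle) (a := Ideal.Quotient.mk _ h) ?_
    (Ideal.Quotient.eq_zero_iff_mem.mpr (Ideal.subset_span hh)) ?_
  · ext s
    obtain ⟨u, rfl⟩ := Ideal.Quotient.mk_surjective s
    exact (mk_mem_maxIdealAt_iff hH).trans (mk_mem_maxIdealAt_iff hH').symm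
  · intro s hs
    obtain ⟨u, rfl⟩ := Ideal.Quotient.mk_surjective s
    rw [← map_mul, Ne, Ideal.Quotient.eq_zero_iff_mem]
    exact hloc u ((mk_mem_maxIdealAt_iff hH).not.mp hs)

end Multiplicity

/-- Let `F = {f₁,…,fₙ} ⊂ ℂ[x₁,…,xₙ]` have an isolated singular zero
`p ∈ ℂⁿ` and let `λ ∈ ℂⁿ` be a nonzero left null vector of the Jacobian, `λ·J(F)(p) = 0`.
For `G′ = {λ₁ ∂f₁/∂x_j + ⋯ + λₙ ∂fₙ/∂x_j : j = 1,…,n}`, the multiplicity of `p` as a zero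
of `F ∪ G′` is strictly smaller than the multiplicity of `p` as a zero of `F`. -/
theorem multiplicity_lt_of_deflation_left_kernel {n : ℕ}
    (f : Fin n → MvPolynomial (Fin n) ℂ) (p : Fin n → ℂ)
    (hzero : ∀ i, eval p (f i) = 0)
    (hisolated : ∃ ε > 0, ∀ y : Fin n → ℂ, dist y p < ε → (∀ i, eval y (f i) = 0) → y = p)
    (hsingular : jacRank f p < n)
    (lam : Fin n → ℂ) (hlam : lam ≠ 0)
    (hker : ∀ j : Fin n, ∑ i : Fin n, lam i * eval p (pderiv j (f i)) = 0) :
    zeroMultiplicity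
        (Set.range f ∪
          Set.range fun j : Fin n => ∑ i : Fin n, C (lam i) * pderiv j (f i)) p <
      zeroMultiplicity (Set.range f) p := by
  obtain ⟨ε, hε, honly⟩ := hisolated
  have hfp : Ideal.span (Set.range f) ≤ RingHom.ker (eval p) :=
    Ideal.span_le.mpr (Set.range_subset_iff.mpr hzero)
  have hacc : ¬ AccPt p (𝓟 (zeroLocus ℂ (Ideal.span (Set.range f)))) := by
    rw [accPt_iff_frequently, not_frequently]
    filter_upwards [Metric.ball_mem_nhds p hε] with y hy ⟨hyp, hyf⟩
    exact hyp (honly y hy fun i ↦ hyf (f i) (Ideal.subset_span ⟨i, rfl⟩))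
  have hmin : RingHom.ker (eval p) ∈ (Ideal.span (Set.range f)).minimalPrimes :=
    ker_eval_mem_minimalPrimes_of_not_accPt (fun _ hh ↦ hfp hh) hacc
  obtain ⟨j, hj⟩ := exists_mul_pderiv_sum_notMem_span_range hmin hlam
  refine zeroMultiplicity_lt_of_subset Set.subset_union_left ?_ hmin (.inr ⟨j, rfl⟩) hj
  rw [Ideal.span_union, sup_le_iff, and_iff_right hfp, Ideal.span_le, Set.range_subset_iff]
  intro j
  simpa using hker j
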